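/- Let T be a finite tree on vertex set V rooted at a vertex r, let i be any vertex, and let w and w' be two weight functions for T. If [𝓛(w)^k]_{i,r} = [𝓛(w')^k]_{i,r} for every natural number k (equality of all Markov parameters from the input at r to a single sensor at node i), then the weight of the unique path from i to r is the same for both weight functions: the product of w over the edges of P_{i,r} equals the product of w' over the edges of P_{i,r}. -/

import Mathlib

open Finset

/-- A weight function for the simple graph `G`: symmetric, positive exactly on
adjacent pairs, zero otherwise (and zero on the diagonal). -/
def IsWeightFn {V : Type*} (G : SimpleGraph V) (w : V → V → ℝ) : Prop :=
  (∀ u v, w u v = w v u) ∧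
  (∀ u v, G.Adj u v → 0 < w u v) ∧
  (∀ u v, u ≠ v → ¬ G.Adj u v → w u v = 0) ∧
  (∀ v, w v v = 0)

/-- The state matrix `𝓛(w)` (the negative of the weighted Laplacian):
`[𝓛(w)]_{u,v} = w(u,v)` for `u ≠ v`, and `[𝓛(w)]_{v,v} = -∑_{u ≠ v} w(v,u)`. -/
def stateMatrix {V : Type*} [Fintype V] [DecidableEq V] (w : V → V → ℝ) :
    Matrix V V ℝ :=
  Matrix.of fun u v => if u = v then -(∑ x ∈ Finset.univ.erase v, w v x) else w u v

/-- The weight of a walk: the product of the edge weights along it. -/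
def walkWeight {V : Type*} {G : SimpleGraph V} (w : V → V → ℝ) {i r : V}
    (p : G.Walk i r) : ℝ :=
  (p.darts.map fun d => w d.toProd.1 d.toProd.2).prod

/-!
The `(u, v)` entry of `A ^ k` is a sum over the ways of going from `u` to `v` in `k` steps, each
following an edge or, because of the diagonal of `A`, staying put. If a walk `p` is the only walk of
length at most `p.length` between its ends, then in `A ^ p.length` there is no time to stay put and
no other route, so the entry is the product of `A` along `p`: the path weight is itself a Markov
parameter. In a tree, every path is the unique shortest walk between its ends.
-/

section UniqueShortest

variable {V : Type*} {G : SimpleGraph V} {u v x : V}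

/-- The walk `p` is the unique shortest walk between its ends. This is phrased as one condition:
every walk that is no longer than `p` equals `p`. -/
def IsUniqueShortest (p : G.Walk u v) : Prop :=
  ∀ q : G.Walk u v, q.length ≤ p.length → q = p

lemma IsUniqueShortest.of_cons {hux : G.Adj u x} {p : G.Walk x v}
    (hp : IsUniqueShortest (p.cons hux)) : IsUniqueShortest p := by
  intro q hq
  have hcons : q.cons hux = p.cons hux := hp _ (by simpa using hq)
  simpa using hcons

lemma IsUniqueShortest.of_isAcyclic (hG : G.IsAcyclic) {p : G.Walk u v} (hp : p.IsPath) :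
    IsUniqueShortest p := by
  classical
  intro q hq
  have hbypass : q.bypass = p :=
    congrArg Subtype.val ((hG.subsingleton_path u v).elim ⟨_, q.bypass_isPath⟩ ⟨p, hp⟩)
  rw [← hbypass, q.bypass_eq_self_of_length_le_length_bypass (hbypass ▸ hq)]

end UniqueShortest

section WalkProd

variable {V R : Type*} {G : SimpleGraph V} {u v x : V}

/-- The product, in order, of the entries of the matrix `A` along a walk. It plays the role of
`walkWeight` for matrices over an arbitrary monoid. -/
def walkProd [Monoid R] (A : Matrix V V R) (p : G.Walk u v) : R :=
  (p.darts.map fun d => A d.fst d.snd).prod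

@[simp]
lemma walkProd_nil [Monoid R] (A : Matrix V V R) :
    walkProd A (SimpleGraph.Walk.nil : G.Walk u u) = 1 := rfl

@[simp]
lemma walkProd_cons [Monoid R] (A : Matrix V V R) (hux : G.Adj u x) (p : G.Walk x v) :
    walkProd A (p.cons hux) = A u x * walkProd A p := by
  simp [walkProd]

end WalkProd

/-- The matrix `A` has the sparsity pattern of the graph `G`: its nonzero entries lie on edges of
`G` or on the diagonal, which is unrestricted. -/
def IsSupportedOn {V R : Type*} [Zero R] (A : Matrix V V R) (G : SimpleGraph V) : Prop :=
  ∀ ⦃u v⦄, A u v ≠ 0 → u = v ∨ G.Adj u v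

section Powers

variable {V R : Type*} [Fintype V] [DecidableEq V] [Semiring R] {G : SimpleGraph V}
  {A B : Matrix V V R} {u v : V}

lemma IsSupportedOn.exists_walk_length_le_of_pow_apply_ne_zero (hA : IsSupportedOn A G) {k : ℕ}
    (hk : (A ^ k) u v ≠ 0) : ∃ p : G.Walk u v, p.length ≤ k := by
  induction k generalizing u with
  | zero =>
    obtain rfl : u = v := by
      by_contra hne
      simp [hne] at hk
    exact ⟨.nil, le_rfl⟩
  | succ k ih =>
    rw [pow_succ', Matrix.mul_apply] at hk
    obtain ⟨x, -, hx⟩ := Finset.exists_ne_zero_of_sum_ne_zero hk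
    obtain ⟨p, hp⟩ := ih (right_ne_zero_of_mul hx)
    obtain rfl | hux := hA (left_ne_zero_of_mul hx)
    · exact ⟨p, hp.trans k.le_succ⟩
    · exact ⟨p.cons hux, Nat.succ_le_succ hp⟩

lemma IsSupportedOn.eq_of_mul_pow_apply_ne_zero (hA : IsSupportedOn A G) {x y : V}
    {huy : G.Adj u y} {p : G.Walk y v} (hp : IsUniqueShortest (p.cons huy))
    (hx : A u x * (A ^ p.length) x v ≠ 0) : x = y := by
  obtain ⟨q, hq⟩ := hA.exists_walk_length_le_of_pow_apply_ne_zero (right_ne_zero_of_mul hx)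
  obtain rfl | hux := hA (left_ne_zero_of_mul hx)
  · have hlength := congrArg SimpleGraph.Walk.length (hp q (hq.trans (Nat.le_succ _)))
    rw [SimpleGraph.Walk.length_cons] at hlength
    omega
  · have hcons : q.cons hux = p.cons huy := hp _ (Nat.succ_le_succ hq)
    simpa using congrArg SimpleGraph.Walk.snd hcons

lemma IsSupportedOn.pow_length_apply_eq_walkProd (hA : IsSupportedOn A G) {p : G.Walk u v}
    (hp : IsUniqueShortest p) : (A ^ p.length) u v = walkProd A p := by
  induction p with
  | nil => simp
  | @cons u y v huy p ih =>
    have hother (x : V) (hxy : x ≠ y) : A u x * (A ^ p.length) x v = 0 :=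
      not_not.mp (mt (hA.eq_of_mul_pow_apply_ne_zero hp) hxy)
    calc (A ^ (p.length + 1)) u v
        = ∑ x, A u x * (A ^ p.length) x v := by rw [pow_succ', Matrix.mul_apply]
      _ = A u y * (A ^ p.length) y v := Fintype.sum_eq_single y hother
      _ = walkProd A (p.cons huy) := by rw [ih hp.of_cons, walkProd_cons]

theorem pathWeight_identifiable_from_single_sensor_general (hA : IsSupportedOn A G)
    (hB : IsSupportedOn B G) {p : G.Walk u v} (hp : IsUniqueShortest p)
    (h : (A ^ p.length) u v = (B ^ p.length) u v) : walkProd A p = walkProd B p := by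
  rw [← hA.pow_length_apply_eq_walkProd hp, h, hB.pow_length_apply_eq_walkProd hp]

end Powers

section StateMatrix

variable {V : Type*} [Fintype V] [DecidableEq V] {G : SimpleGraph V} {w : V → V → ℝ} {u v : V}

lemma stateMatrix_apply_of_ne (w : V → V → ℝ) (huv : u ≠ v) : stateMatrix w u v = w u v :=
  if_neg huv

lemma IsWeightFn.isSupportedOn_stateMatrix (hw : IsWeightFn G w) :
    IsSupportedOn (stateMatrix w) G := by
  intro u v huv
  by_contra! hnot
  exact huv ((stateMatrix_apply_of_ne w hnot.1).trans (hw.2.2.1 u v hnot.1 hnot.2))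

lemma walkProd_stateMatrix (w : V → V → ℝ) (p : G.Walk u v) :
    walkProd (stateMatrix w) p = walkWeight w p :=
  congrArg List.prod (List.map_congr_left fun d _ => stateMatrix_apply_of_ne w d.adj.ne)

end StateMatrix

theorem pathWeight_identifiable_from_single_sensor
    {V : Type*} [Fintype V] [DecidableEq V] (G : SimpleGraph V)
    (hT : G.IsTree) (r i : V)
    (w w' : V → V → ℝ) (hw : IsWeightFn G w) (hw' : IsWeightFn G w')
    (h : ∀ k : ℕ, (stateMatrix w ^ k) i r = (stateMatrix w' ^ k) i r)
    (p : G.Walk i r) (hp : p.IsPath) :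
    walkWeight w p = walkWeight w' p := by
  simpa only [walkProd_stateMatrix] using pathWeight_identifiable_from_single_sensor_general
    hw.isSupportedOn_stateMatrix hw'.isSupportedOn_stateMatrix
    (.of_isAcyclic hT.isAcyclic hp) (h p.length)
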